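/- With σ_e² = 1, σ_d² = 3, σ_W² = 0.4, P̄ = 0.1 and zero subjective means, define the quantizer encoder x(m) = √0.1·sgn(m) and the decoder ψ(y) = √(2/π)·√3·tanh(√0.1·y/0.4) (which is the decoder's best response to the quantizer under its prior N(0,3)). Then the integral of (m − ψ(√0.1·sgn(m) + w))² with respect to (gaussianReal 0 1) ⊗ (gaussianReal 0 0.4) is strictly less than g(t) for every t ∈ [0, 0.1], where g(t) = (t·9·0.4 + 0.4²·1)/(3t + 0.4)². -/

import Mathlib

open MeasureTheory ProbabilityTheory

open scoped NNReal

/-!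
Let `W` be the noise, `a` the amplitude of the quantizer and `Y = a + W`. Reflecting the noise turns
the error at `m < 0` into the error at `|m|`, so the quantizer costs
`E[m²] - 2 E|m| E[ψ(Y)] + E[ψ(Y)²]` for every odd decoder `ψ`. For Gaussian noise of variance `v`,
`tanh (a y / v)` is the conditional mean of a uniform random sign given that `± a + W = y`; hence
`E[f(Y)] = E[f(Y) tanh (a Y / v)]` for odd `f`. Applied to `f = tanh (a · / v)` this gives the cost
`s - (2 / π) √d (2 √s - √d) E[tanh² (a Y / v)]`, which is less than the source variance `s` as soon
as `0 < d < 4 s`. An affine encoder, on the other hand, costs at least `s` as long as its squared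
gain is at most `v (d - 2 s) / (d s)`: with so little power, transmitting to a decoder that
overestimates the source variance only does harm.
-/

@[fun_prop]
theorem continuous_tanh : Continuous Real.tanh := by
  rw [funext Real.tanh_eq_sinh_div_cosh]
  exact Real.continuous_sinh.div Real.continuous_cosh fun x => (Real.cosh_pos x).ne'

theorem tanh_eq_zero_iff {x : ℝ} : Real.tanh x = 0 ↔ x = 0 :=
  Real.tanh_injective.eq_iff' Real.tanh_zero

theorem exp_neg_two_mul_mul_one_add_tanh (x : ℝ) :
    Real.exp (-(2 * x)) * (1 + Real.tanh x) = 1 - Real.tanh x := by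
  have hexp : Real.exp x * Real.exp (-x) = 1 := by
    rw [← Real.exp_add, add_neg_cancel, Real.exp_zero]
  rw [Real.tanh_eq, show -(2 * x) = -x + -x by ring, Real.exp_add]
  field_simp
  linear_combination (2 * Real.exp (-x)) * hexp

@[fun_prop]
theorem measurable_real_sign : Measurable Real.sign :=
  Measurable.ite measurableSet_Iio measurable_const
    (Measurable.ite measurableSet_Ioi measurable_const measurable_const)

theorem integral_eq_zero_of_odd {G E : Type*} [MeasurableSpace G] [AddGroup G]
    [MeasurableNeg G] [NormedAddCommGroup E] [NormedSpace ℝ E] {μ : Measure G}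
    [μ.IsNegInvariant] {f : G → E} (hf : Function.Odd f) : ∫ x, f x ∂μ = 0 := by
  have : IsAddTorsionFree E := .of_isTorsionFree ℝ E
  simp_rw [← self_eq_neg, ← integral_neg, ← hf _, integral_neg_eq_self]

theorem integral_const_sub_sq {Ω : Type*} [MeasurableSpace Ω] {μ : Measure Ω}
    [IsProbabilityMeasure μ] {X : Ω → ℝ} (hX : MemLp X 2 μ) (k : ℝ) :
    ∫ ω, (k - X ω) ^ 2 ∂μ = k ^ 2 - 2 * k * ∫ ω, X ω ∂μ + ∫ ω, X ω ^ 2 ∂μ := by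
  have hint : Integrable (fun ω => 2 * k * X ω) μ := (hX.integrable one_le_two).const_mul _
  have hsub : Integrable (fun ω => k ^ 2 - 2 * k * X ω) μ := (integrable_const _).sub hint
  simp only [sub_sq]
  rw [integral_add hsub hX.integrable_sq, integral_sub (integrable_const _) hint,
    integral_const_mul, integral_const, probReal_univ, one_smul]

instance isNegInvariant_gaussianReal (v : ℝ≥0) : (gaussianReal 0 v).IsNegInvariant :=
  ⟨gaussianReal_map_neg.trans (by rw [neg_zero])⟩

theorem integral_sq_gaussianReal_zero (v : ℝ≥0) : ∫ x, x ^ 2 ∂gaussianReal 0 v = v := by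
  rw [← variance_of_integral_eq_zero (by fun_prop) integral_id_gaussianReal,
    variance_fun_id_gaussianReal]

theorem integral_abs_gaussianReal_zero (v : ℝ≥0) :
    ∫ x, |x| ∂gaussianReal 0 v = √(2 / Real.pi) * √v := by
  rcases eq_or_ne v 0 with rfl | hv
  · simp
  let f : ℝ → ℝ := fun z =>
    (√(2 * Real.pi * v))⁻¹ * (z ^ (1 : ℝ) * Real.exp (-(1 / (2 * v)) * z ^ (2 : ℝ)))
  have hpdf (x : ℝ) : gaussianPDFReal 0 v x • |x| = f |x| := by
    simp only [gaussianPDFReal, f, smul_eq_mul, sub_zero, Real.rpow_one, Real.rpow_two, sq_abs]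
    ring_nf
  rw [integral_gaussianReal_eq_integral_smul hv, integral_congr_ae (.of_forall hpdf),
    integral_comp_abs (f := f), integral_const_mul,
    integral_rpow_mul_exp_neg_mul_rpow (by norm_num) (by norm_num) (by positivity)]
  have hconst :
      (1 / (2 * v) : ℝ) ^ (-(1 + 1) / 2 : ℝ) * (1 / 2) * Real.Gamma ((1 + 1) / 2) = v := by
    rw [show (-(1 + 1) / 2 : ℝ) = -1 by norm_num, Real.rpow_neg_one, add_self_div_two,
      Real.Gamma_one]
    field_simp
  have hvsq : √(v : ℝ) ^ 2 = v := Real.sq_sqrt v.coe_nonneg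
  have htwo : √2 ^ 2 = (2 : ℝ) := Real.sq_sqrt zero_le_two
  rw [hconst, Real.sqrt_mul (by positivity), Real.sqrt_mul zero_le_two, Real.sqrt_div zero_le_two]
  field_simp
  rw [hvsq, htwo]

theorem integral_gaussianReal_zero_comp_const_add (a : ℝ) (v : ℝ≥0) {f : ℝ → ℝ}
    (hf : Measurable f) : ∫ w, f (a + w) ∂gaussianReal 0 v = ∫ y, f y ∂gaussianReal a v := by
  rw [← integral_map (by fun_prop) hf.aestronglyMeasurable, gaussianReal_map_const_add, zero_add]

theorem gaussianPDFReal_neg (a : ℝ) (v : ℝ≥0) (y : ℝ) :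
    gaussianPDFReal a v (-y) = Real.exp (-(2 * (a * y / v))) * gaussianPDFReal a v y := by
  rcases eq_or_ne v 0 with rfl | hv
  · simp
  rw [gaussianPDFReal, gaussianPDFReal, mul_left_comm, ← Real.exp_add]
  congr 2
  field_simp
  ring

theorem integral_mul_tanh_gaussianReal_of_odd (a : ℝ) {v : ℝ≥0} (hv : v ≠ 0) {f : ℝ → ℝ}
    (hodd : Function.Odd f) (hf : Integrable f (gaussianReal a v)) :
    ∫ y, f y * Real.tanh (a * y / v) ∂gaussianReal a v = ∫ y, f y ∂gaussianReal a v := by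
  have hmul : Integrable (fun y => f y * Real.tanh (a * y / v)) (gaussianReal a v) :=
    hf.mul_bdd (c := 1) (by fun_prop) (.of_forall fun y => (Real.abs_tanh_lt_one _).le)
  rw [eq_comm, ← sub_eq_zero, ← integral_sub hf hmul, integral_gaussianReal_eq_integral_smul hv]
  refine integral_eq_zero_of_odd fun y => ?_
  simp only [smul_eq_mul, gaussianPDFReal_neg, hodd y, mul_neg, neg_div, Real.tanh_neg]
  linear_combination
    (-gaussianPDFReal a v y * f y) * exp_neg_two_mul_mul_one_add_tanh (a * y / v)

theorem integral_tanh_sq_gaussianReal_pos {a : ℝ} (ha : a ≠ 0) {v : ℝ≥0} (hv : v ≠ 0) :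
    0 < ∫ y, Real.tanh (a * y / v) ^ 2 ∂gaussianReal a v := by
  have hint : Integrable (fun y => Real.tanh (a * y / v) ^ 2) (gaussianReal a v) :=
    (MemLp.of_bound (by fun_prop) 1 (.of_forall fun y => (Real.abs_tanh_lt_one _).le)).integrable_sq
  have hsupport : Function.support (fun y : ℝ => Real.tanh (a * y / v) ^ 2) = {0}ᶜ := by
    ext y
    simp [tanh_eq_zero_iff, ha, hv]
  have := nullSingletonClass_gaussianReal (μ := a) hv
  rw [integral_pos_iff_support_of_nonneg (fun y => sq_nonneg _) hint, hsupport,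
    prob_compl_eq_one_sub (measurableSet_singleton _), measure_singleton, tsub_zero]
  exact zero_lt_one

/-- Expected squared error when a source with law `μ` is encoded by `x`, sent through a channel with
independent additive noise of law `ν`, and estimated by the decoder `ψ` from the channel output. -/
noncomputable def distortion (μ ν : Measure ℝ) (x ψ : ℝ → ℝ) : ℝ :=
  ∫ p, (p.1 - ψ (x p.1 + p.2)) ^ 2 ∂μ.prod ν

/-- The one-bit quantization encoder of amplitude `a`. -/
noncomputable def signQuantizer (a m : ℝ) : ℝ :=
  a * Real.sign m

/-- The conditional mean `E[m | y]`, for a source of law `N(0, d)` sent through `signQuantizer a`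
over a channel with noise of law `N(0, v)`: the best response of a decoder with prior `N(0, d)`. -/
noncomputable def signDecoder (d v : ℝ≥0) (a y : ℝ) : ℝ :=
  √(2 / Real.pi) * √d * Real.tanh (a * y / v)

@[fun_prop]
theorem measurable_signQuantizer (a : ℝ) : Measurable (signQuantizer a) := by
  unfold signQuantizer
  fun_prop

@[fun_prop]
theorem continuous_signDecoder (d v : ℝ≥0) (a : ℝ) : Continuous (signDecoder d v a) := by
  unfold signDecoder
  fun_prop

theorem odd_signDecoder (d v : ℝ≥0) (a : ℝ) : Function.Odd (signDecoder d v a) := fun y => by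
  simp only [signDecoder, mul_neg, neg_div, Real.tanh_neg]

theorem abs_signDecoder_le (d v : ℝ≥0) (a y : ℝ) :
    |signDecoder d v a y| ≤ √(2 / Real.pi) * √d := by
  rw [signDecoder, abs_mul, abs_of_nonneg (by positivity)]
  exact mul_le_of_le_one_right (by positivity) (Real.abs_tanh_lt_one _).le

theorem integral_sq_sub_signQuantizer {ν : Measure ℝ} [ν.IsNegInvariant] {ψ : ℝ → ℝ}
    (hψ : Function.Odd ψ) (a : ℝ) {m : ℝ} (hm : m ≠ 0) :
    ∫ w, (m - ψ (signQuantizer a m + w)) ^ 2 ∂ν = ∫ w, (|m| - ψ (a + w)) ^ 2 ∂ν := by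
  rcases hm.lt_or_gt with hneg | hpos
  · rw [← integral_neg_eq_self _ ν]
    congr 1 with w
    rw [signQuantizer, Real.sign_of_neg hneg, abs_of_neg hneg,
      show a * -1 + -w = -(a + w) by ring, hψ]
    ring
  · simp only [signQuantizer, Real.sign_of_pos hpos, abs_of_pos hpos, mul_one]

theorem distortion_signQuantizer_of_odd {μ ν : Measure ℝ} [IsProbabilityMeasure μ]
    [IsProbabilityMeasure ν] [ν.IsNegInvariant] (hμ : MemLp id 2 μ) (hμ0 : μ {0} = 0) {ψ : ℝ → ℝ}
    (hψ : Measurable ψ) (hodd : Function.Odd ψ) {C : ℝ} (hC : ∀ y, |ψ y| ≤ C) (a : ℝ) :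
    distortion μ ν (signQuantizer a) ψ =
      ∫ m, m ^ 2 ∂μ - 2 * (∫ m, |m| ∂μ) * ∫ w, ψ (a + w) ∂ν + ∫ w, ψ (a + w) ^ 2 ∂ν := by
  have hdec : MemLp (fun p : ℝ × ℝ => ψ (signQuantizer a p.1 + p.2)) 2 (μ.prod ν) :=
    .of_bound (hψ.comp (by fun_prop)).aestronglyMeasurable C (.of_forall fun _ => hC _)
  have hshift : MemLp (fun w => ψ (a + w)) 2 ν :=
    .of_bound (hψ.comp (by fun_prop)).aestronglyMeasurable C (.of_forall fun _ => hC _)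
  have hsource : ∀ᵐ m ∂μ, m ≠ 0 := measure_eq_zero_iff_ae_notMem.mp hμ0
  have hsq : Integrable (fun m : ℝ => m ^ 2) μ := hμ.integrable_sq
  have habs : Integrable (fun m : ℝ => 2 * |m| * ∫ w, ψ (a + w) ∂ν) μ :=
    ((hμ.integrable one_le_two).abs.const_mul 2).mul_const _
  have hsub : Integrable (fun m : ℝ => m ^ 2 - 2 * |m| * ∫ w, ψ (a + w) ∂ν) μ := hsq.sub habs
  calc distortion μ ν (signQuantizer a) ψ
    _ = ∫ m, ∫ w, (m - ψ (signQuantizer a m + w)) ^ 2 ∂ν ∂μ :=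
      integral_prod _ ((hμ.comp_fst ν).sub hdec).integrable_sq
    _ = ∫ m, (m ^ 2 - 2 * |m| * ∫ w, ψ (a + w) ∂ν + ∫ w, ψ (a + w) ^ 2 ∂ν) ∂μ := by
      refine integral_congr_ae (hsource.mono fun m hm => ?_)
      simp only [integral_sq_sub_signQuantizer hodd a hm, integral_const_sub_sq hshift, sq_abs]
    _ = ∫ m, m ^ 2 ∂μ - 2 * (∫ m, |m| ∂μ) * ∫ w, ψ (a + w) ∂ν + ∫ w, ψ (a + w) ^ 2 ∂ν := by
      rw [integral_add hsub (integrable_const _), integral_sub hsq habs,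
        integral_mul_const, integral_const_mul, integral_const, probReal_univ, one_smul]

theorem integral_signDecoder_gaussianReal (d : ℝ≥0) {v : ℝ≥0} (hv : v ≠ 0) (a : ℝ) :
    ∫ y, signDecoder d v a y ∂gaussianReal a v =
      √(2 / Real.pi) * √d * ∫ y, Real.tanh (a * y / v) ^ 2 ∂gaussianReal a v := by
  have hint : Integrable (signDecoder d v a) (gaussianReal a v) :=
    .of_bound (by fun_prop) _ (.of_forall (abs_signDecoder_le d v a))
  rw [← integral_mul_tanh_gaussianReal_of_odd a hv (odd_signDecoder d v a) hint,
    ← integral_const_mul]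
  congr 1 with y
  rw [signDecoder]
  ring

theorem distortion_signQuantizer_signDecoder {s : ℝ≥0} (hs : s ≠ 0) (d : ℝ≥0) {v : ℝ≥0}
    (hv : v ≠ 0) (a : ℝ) :
    distortion (gaussianReal 0 s) (gaussianReal 0 v) (signQuantizer a) (signDecoder d v a) =
      s - 2 / Real.pi * (√d * (2 * √s - √d)) *
        ∫ y, Real.tanh (a * y / v) ^ 2 ∂gaussianReal a v := by
  have := nullSingletonClass_gaussianReal (μ := 0) hs
  have hdec : Measurable (signDecoder d v a) := (continuous_signDecoder d v a).measurable
  have hpi : √(2 / Real.pi) ^ 2 = 2 / Real.pi := Real.sq_sqrt (by positivity)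
  rw [distortion_signQuantizer_of_odd (memLp_id_gaussianReal 2) (measure_singleton 0) hdec
    (odd_signDecoder d v a) (abs_signDecoder_le d v a),
    integral_sq_gaussianReal_zero, integral_abs_gaussianReal_zero,
    integral_gaussianReal_zero_comp_const_add a v hdec,
    integral_gaussianReal_zero_comp_const_add a v (hdec.pow_const 2),
    integral_signDecoder_gaussianReal d hv]
  simp only [signDecoder, mul_pow _ (Real.tanh _), integral_const_mul]
  linear_combination (√d ^ 2 - 2 * √s * √d) *
    (∫ y, Real.tanh (a * y / v) ^ 2 ∂gaussianReal a v) * hpi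

theorem distortion_signQuantizer_lt_variance {s d v : ℝ≥0} (hd : 0 < d) (hds : d < 4 * s)
    (hv : v ≠ 0) {a : ℝ} (ha : a ≠ 0) :
    distortion (gaussianReal 0 s) (gaussianReal 0 v) (signQuantizer a) (signDecoder d v a) < s := by
  have hs : s ≠ 0 := by
    rintro rfl
    simp at hds
  have hsqrt : √d < 2 * √s := by
    rw [Real.sqrt_lt' (by positivity), mul_pow, Real.sq_sqrt s.coe_nonneg,
      show (2 : ℝ) ^ 2 = 4 by norm_num]
    exact_mod_cast hds
  have hcoeff : 0 < 2 / Real.pi * (√d * (2 * √s - √d)) :=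
    mul_pos (by positivity) (mul_pos (by positivity) (sub_pos.mpr hsqrt))
  rw [distortion_signQuantizer_signDecoder hs d hv]
  exact sub_lt_self _ (mul_pos hcoeff (integral_tanh_sq_gaussianReal_pos ha hv))

/-- The expected distortion `g(A²)` under an encoder `x = A m + C`, in terms of `t = A²`: the source
has variance `s`, the noise has variance `v`, and the decoder best responds under the prior
`N(0, d)`. -/
noncomputable def affineCost (s d v t : ℝ) : ℝ :=
  (t * d ^ 2 * v + v ^ 2 * s) / (d * t + v) ^ 2

theorem le_affineCost {s d v t : ℝ} (hd : 0 ≤ d) (hv : 0 < v) (ht : 0 ≤ t)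
    (h : t * s * d ≤ v * (d - 2 * s)) : s ≤ affineCost s d v t := by
  have hdiff : 0 ≤ t * d * (v * (d - 2 * s) - t * s * d) :=
    mul_nonneg (mul_nonneg ht hd) (sub_nonneg.mpr h)
  rw [affineCost, le_div_iff₀ (by positivity)]
  linear_combination hdiff

theorem stmt15_general {s d v : ℝ≥0} (hv : 0 < v) (hds : d < 4 * s) {P : ℝ} (hP : 0 < P)
    (hPd : P * d ≤ v * (d - 2 * s)) {t : ℝ} (ht : t ∈ Set.Icc 0 (P / s)) :
    distortion (gaussianReal 0 s) (gaussianReal 0 v) (signQuantizer √P) (signDecoder d v √P) <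
      affineCost s d v t := by
  have hs : (0 : ℝ) < s := by
    have : (d : ℝ) < 4 * s := by exact_mod_cast hds
    linarith [d.coe_nonneg]
  have hsd : (0 : ℝ) ≤ d - 2 * s :=
    nonneg_of_mul_nonneg_right ((by positivity : 0 ≤ P * d).trans hPd) hv
  have hd : 0 < d := NNReal.coe_pos.mp (by linarith)
  have hts : t * s ≤ P := (le_div_iff₀ hs).mp ht.2
  calc distortion (gaussianReal 0 s) (gaussianReal 0 v) (signQuantizer √P) (signDecoder d v √P)
    _ < s := distortion_signQuantizer_lt_variance hd hds hv.ne' (Real.sqrt_pos.mpr hP).ne'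
    _ ≤ affineCost s d v t := le_affineCost d.coe_nonneg hv ht.1
      ((mul_le_mul_of_nonneg_right hts d.coe_nonneg).trans hPd)

theorem stmt15 :
    let ψ : ℝ → ℝ := fun y =>
      Real.sqrt (2 / Real.pi) * Real.sqrt 3 * Real.tanh (Real.sqrt 0.1 * y / 0.4)
    let ν : Measure (ℝ × ℝ) :=
      (gaussianReal 0 1).prod (gaussianReal 0 ⟨0.4, by norm_num⟩)
    let g : ℝ → ℝ := fun t => (t * 9 * 0.4 + 0.4 ^ 2 * 1) / (3 * t + 0.4) ^ 2
    ∀ t ∈ Set.Icc (0 : ℝ) 0.1,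
      (∫ p, (p.1 - ψ (Real.sqrt 0.1 * Real.sign p.1 + p.2)) ^ 2 ∂ν) < g t := by
  intro ψ ν g t ht
  have hv : (0 : ℝ≥0) < ⟨0.4, by norm_num⟩ := NNReal.coe_pos.mp (by norm_num [NNReal.toReal])
  have hP : (0.1 : ℝ) * (3 : ℝ≥0) ≤ 0.4 * ((3 : ℝ≥0) - 2 * (1 : ℝ≥0)) := by norm_num
  convert stmt15_general (s := 1) (d := 3) hv (by norm_num) (by norm_num) hP
    (t := t) (by simpa using ht) using 1
  · rfl
  · change g t = affineCost 1 3 0.4 t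
    norm_num [g, affineCost]
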